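/- Let R be a brace algebra and let μ : T(R^𝒯) → T(R) be the map defined by μ(1)=1, μ(t_1⋯t_n)=μ(t_1)⋯μ(t_n), and μ(B_+^x(s_1⋯s_q)) = M_{1q}(x; μ(s_1)⋯μ(s_q)). Then μ intertwines the Loday–Ronco products: μ(f_1 ⋆ f_2) = μ(f_1) ⋆ μ(f_2) for all decorated forests f_1, f_2 ∈ T(R^𝒯), where on the left ⋆ is the product of T(R^𝒯) induced by the recursive brace operation on decorated trees and on the right ⋆ is the product of T(R) induced by the brace structure of R. -/

import Mathlib

/-! Setup: a brace algebra `R`, the Loday–Ronco product on `T(R)` (realized in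
the tensor algebra), `R`-decorated planar rooted trees with their recursive
brace operation and the induced Loday–Ronco product on decorated forests, and
the maps `ι : T(R) → T(R^𝒯)` and `μ : T(R^𝒯) → T(R)`. -/

/-- Planar rooted trees with vertices decorated by elements of `R`. -/
inductive PTree (R : Type*) : Type _
  | node : R → List (PTree R) → PTree R

section

variable (K : Type*) [Field K] {R : Type*} [AddCommGroup R] [Module K R]

/-- All splittings of a list into a prefix and a suffix. -/
def splits {α : Type*} (l : List α) : List (List α × List α) :=
  (List.range (l.length + 1)).map fun i => (l.take i, l.drop i)

/-- All factorizations of a list into `k` (possibly empty) consecutive factors. -/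
def splitsN {α : Type*} : ℕ → List α → List (List (List α))
  | 0, l => if l.isEmpty then [[]] else []
  | k + 1, l => (splits l).flatMap fun p => (splitsN k p.2).map fun r => p.1 :: r

variable {K}

/-- The word on the right-hand side of the brace relation, for a factorization
of `zs` into `2n+1` consecutive (possibly empty) blocks braced into `ys`. -/
def braceRHSword (M : R → List R → R) : List (List R) → List R → List R
  | [P], [] => P
  | P :: B :: rest, y :: ys => P ++ M y B :: braceRHSword M rest ys
  | _, _ => []

/-- The brace relation for operations `{x; y₁,…,y_q} = M(x; y₁⋯y_q)`. -/
def BraceRel (M : R → List R → R) : Prop :=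
  ∀ (x : R) (ys zs : List R),
    M (M x ys) zs =
      ((splitsN (2 * ys.length + 1) zs).map fun Zs => M x (braceRHSword M Zs ys)).sum

/-- The extension `M(X;Y)` of the brace operations to pairs of words. -/
def Mext (M : R → List R → R) : List R → List R → R
  | [], [] => 0
  | [], [y] => y
  | [], _ :: _ :: _ => 0
  | [x], ys => M x ys
  | _ :: _ :: _, _ => 0

/-- The list of words (with multiplicities) whose formal sum is the Loday–Ronco
product `X ⋆ Y` in `T(R)` (with `1 ⋆ 1 = 1`; terms with `k > |X| + |Y|` vanish). -/
def starWords (M : R → List R → R) : List R → List R → List (List R)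
  | [], [] => [[]]
  | X, Y =>
    (List.range (X.length + Y.length)).flatMap fun k =>
      (splitsN (k + 1) X).flatMap fun Xs =>
        (splitsN (k + 1) Y).map fun Ys => List.zipWith (Mext M) Xs Ys

variable (K)

/-- A word `x₁⋯xₙ ∈ R^{⊗n} ⊂ T(R)`, realized in the tensor algebra. -/
def wd (l : List R) : TensorAlgebra K R :=
  (l.map fun x => TensorAlgebra.ι K x).prod

/-- The Loday–Ronco product `⋆` on `T(R)`, evaluated on two words. -/
def starW (M : R → List R → R) (X Y : List R) : TensorAlgebra K R :=
  ((starWords M X Y).map (wd K)).sum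

/-- Decorated forests: words of decorated trees. -/
abbrev Forest (R : Type*) := List (PTree R)

/-- The space `R^𝒯` spanned by the decorated trees. -/
abbrev TreeMod (R : Type*) := PTree R →₀ K

/-- The space `T(R^𝒯)` of decorated forests. -/
abbrev ForestMod (R : Type*) := Forest R →₀ K

variable {K}

/-- `B₊ˣ` : grafting of a decorated forest onto a new root decorated by `x`. -/
def Bplus (x : R) (f : Forest R) : PTree R := PTree.node x f

/-- The element of `T(R^𝒯)` obtained from a word whose letters are linear
combinations of decorated trees, expanding multilinearly. -/
noncomputable def wordOf : List (TreeMod K R) → ForestMod K R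
  | [] => Finsupp.single ([] : Forest R) 1
  | a :: rest => a.sum fun t c => c • Finsupp.mapDomain (List.cons t) (wordOf rest)

/-- Extension of the tree brace operation to pairs of forests. -/
noncomputable def MextF (Mh : PTree R → Forest R → TreeMod K R) :
    Forest R → Forest R → TreeMod K R
  | [], [] => 0
  | [], [s] => Finsupp.single s 1
  | [], _ :: _ :: _ => 0
  | [t], ys => Mh t ys
  | _ :: _ :: _, _ => 0

/-- The Loday–Ronco product on decorated forests built from a brace operation
`Mh` on decorated trees. -/
noncomputable def starRHS (Mh : PTree R → Forest R → TreeMod K R) :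
    Forest R → Forest R → ForestMod K R
  | [], [] => Finsupp.single ([] : Forest R) 1
  | X, Y =>
    ((List.range (X.length + Y.length)).flatMap fun k =>
      (splitsN (k + 1) X).flatMap fun Xs =>
        (splitsN (k + 1) Y).map fun Ys =>
          wordOf (List.zipWith (MextF Mh) Xs Ys)).sum

/-- `Mh` and `star` satisfy the defining recursion of the brace operation on
decorated trees, `M(B₊ˣ(f₁); f₂) = B₊ˣ(f₁ ⋆ f₂)`, where `⋆` is the Loday–Ronco
product on decorated forests built from `Mh`. -/
def IsTreeBrace (Mh : PTree R → Forest R → TreeMod K R)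
    (star : Forest R → Forest R → ForestMod K R) : Prop :=
  (∀ (x : R) (f₁ f₂ : Forest R),
      Mh (Bplus x f₁) f₂ = Finsupp.mapDomain (Bplus x) (star f₁ f₂)) ∧
  (∀ X Y : Forest R, star X Y = starRHS Mh X Y)

/-- The map `μ` on decorated trees: `μ(B₊ˣ(s₁⋯s_q)) = M_{1q}(x; μ(s₁)⋯μ(s_q))`. -/
def muT (M : R → List R → R) : PTree R → R
  | PTree.node x ts => M x (ts.attach.map fun s => muT M s.1)
decreasing_by
  have := List.sizeOf_lt_of_mem s.2
  simp only [PTree.node.sizeOf_spec]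
  omega

/-- The map `ι : T(R) → T(R^𝒯)`, `ι(x₁⋯xₙ) = B₊^{x₁}(1)⋯B₊^{xₙ}(1)`, on words. -/
def iotaW (xs : List R) : Forest R := xs.map fun x => PTree.node x []

end

theorem aux_splits_nil {α : Type*} : splits ([] : List α) = [([], [])] := by
  simp [splits]

theorem aux_splits_cons {α : Type*} (a : α) (l : List α) :
    splits (a :: l) = ([], a :: l) :: (splits l).map fun p => (a :: p.1, p.2) := by
  simp only [splits, List.length_cons]
  rw [List.range_succ_eq_map]
  simp [List.map_map, Function.comp_def]

theorem aux_splits_length {α : Type*} {l : List α} {p : List α × List α} (hp : p ∈ splits l) :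
    p.2.length ≤ l.length := by
  simp only [splits, List.mem_map] at hp
  obtain ⟨i, _, rfl⟩ := hp
  simp

theorem aux_splits_map {α β : Type*} (f : α → β) (l : List α) :
    splits (l.map f) = (splits l).map fun p => (p.1.map f, p.2.map f) := by
  simp [splits, List.map_map, Function.comp_def, List.map_take, List.map_drop]

theorem aux_splitsN_map {α β : Type*} (f : α → β) (k : ℕ) (l : List α) :
    splitsN k (l.map f) = (splitsN k l).map (List.map (List.map f)) := by
  induction k generalizing l with
  | zero => cases l <;> simp [splitsN]
  | succ k ih =>
    simp only [splitsN, aux_splits_map, List.flatMap_map, List.map_flatMap, ih, List.map_map]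
    rfl

theorem aux_splitsN_mem {α : Type*} (k : ℕ) (l : List α) :
    ∀ Xs ∈ splitsN k l, ∀ X ∈ Xs, ∀ x ∈ X, x ∈ l := by
  induction k generalizing l with
  | zero => cases l <;> simp [splitsN]
  | succ k ih =>
    intro Xs hXs X hX x hx
    simp only [splitsN, List.mem_flatMap, List.mem_map] at hXs
    obtain ⟨p, hp, r, hr, rfl⟩ := hXs
    simp only [splits, List.mem_map] at hp
    obtain ⟨i, _, rfl⟩ := hp
    rcases List.mem_cons.1 hX with rfl | hX
    · exact List.mem_of_mem_take hx
    · exact List.mem_of_mem_drop (ih _ r hr X hX x hx)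

theorem aux_sum_flatMap {α β V : Type*} [AddCommGroup V] (l : List α) (g : α → List β)
    (f : β → V) : ((l.flatMap g).map f).sum = (l.map fun a => ((g a).map f).sum).sum := by
  induction l with
  | nil => simp
  | cons a l ih => simp [ih]

theorem aux_sum_add {α V : Type*} [AddCommGroup V] (l : List α) (f g : α → V) :
    (l.map fun a => f a + g a).sum = (l.map f).sum + (l.map g).sum := by
  induction l with
  | nil => simp
  | cons a l ih => simp only [List.map_cons, List.sum_cons, ih]; abel

theorem aux_sum_zero {α V : Type*} [AddCommGroup V] (l : List α) (f : α → V)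
    (h : ∀ a ∈ l, f a = 0) : (l.map f).sum = 0 := by
  apply List.sum_eq_zero
  simpa using h

theorem aux_sum_comm {α β V : Type*} [AddCommGroup V] (l : List α) (m : List β)
    (f : α → β → V) :
    (l.map fun a => (m.map fun b => f a b).sum).sum
      = (m.map fun b => (l.map fun a => f a b).sum).sum := by
  induction l with
  | nil => simp
  | cons a l ih => simp only [List.map_cons, List.sum_cons, ih, aux_sum_add]

theorem aux_finset_sum {α V : Type*} [AddCommGroup V] (l : List α) (n : ℕ)
    (f : ℕ → α → V) :
    (∑ k ∈ Finset.range n, (l.map fun a => f k a).sum)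
      = (l.map fun a => ∑ k ∈ Finset.range n, f k a).sum := by
  induction l with
  | nil => simp
  | cons a l ih => simp only [List.map_cons, List.sum_cons, Finset.sum_add_distrib, ih]

theorem aux_sum_range {V : Type*} [AddCommGroup V] (n : ℕ) (f : ℕ → V) :
    ((List.range n).map f).sum = ∑ k ∈ Finset.range n, f k := by
  induction n with
  | zero => simp
  | succ n ih => simp [List.range_succ, Finset.sum_range_succ, ih]

section

variable {R : Type*} [AddCommGroup R] {V : Type*} [AddCommGroup V]

/-- The sum on the right of the brace relation, for a general function of words. -/
def auxG (M : R → List R → R) (F : List R → V) (ys zs : List R) : V :=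
  ((splitsN (2 * ys.length + 1) zs).map fun Zs => F (braceRHSword M Zs ys)).sum

theorem auxG_nil (M : R → List R → R) (F : List R → V) (zs : List R) :
    auxG M F [] zs = F zs := by
  induction zs generalizing F with
  | nil => simp [auxG, splitsN, aux_splits_nil, braceRHSword]
  | cons z zs ih =>
    have := ih (fun w => F (z :: w))
    simp only [auxG, List.length_nil, Nat.mul_zero, Nat.zero_add, splitsN, aux_sum_flatMap,
      List.map_map] at this ⊢
    rw [aux_splits_cons]
    simp only [List.map_cons, List.map_map, List.sum_cons]
    rw [← this]
    simp only [List.isEmpty_cons, Bool.false_eq_true, if_false, List.map_nil, List.sum_nil,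
      zero_add]
    congr 1
    apply List.map_congr_left
    intro p _
    simp only [Function.comp]
    split <;> simp [braceRHSword]

theorem auxG_rec (M : R → List R → R) (F : List R → V) (y : R) (ys zs : List R) :
    auxG M F (y :: ys) zs = ((splits zs).map fun p => ((splits p.2).map fun q =>
      auxG M (fun w => F (p.1 ++ M y q.1 :: w)) ys q.2).sum).sum := by
  have : 2 * (y :: ys).length + 1 = (2 * ys.length + 1) + 1 + 1 := by simp; ring
  rw [auxG, this, splitsN]
  rw [aux_sum_flatMap]
  congr 1
  apply List.map_congr_left
  intro p _
  rw [splitsN, List.map_map, aux_sum_flatMap]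
  congr 1
  apply List.map_congr_left
  intro q _
  rw [List.map_map]
  rfl

theorem auxG_cons_nil (M : R → List R → R) (F : List R → V) (y : R) (ys : List R) :
    auxG M F (y :: ys) [] = ((splits ([] : List R)).map fun q =>
      auxG M (fun w => F (M y q.1 :: w)) ys q.2).sum := by
  rw [auxG_rec]; simp [aux_splits_nil]

theorem auxG_cons_cons (M : R → List R → R) (F : List R → V) (y z : R) (ys zs : List R) :
    auxG M F (y :: ys) (z :: zs) = ((splits (z :: zs)).map fun q =>
      auxG M (fun w => F (M y q.1 :: w)) ys q.2).sum
      + auxG M (fun w => F (z :: w)) (y :: ys) zs := by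
  rw [auxG_rec, auxG_rec]
  conv_lhs => rw [aux_splits_cons]
  simp only [List.map_cons, List.map_map, List.sum_cons]
  rfl

/-- The part of the Loday-Ronco product with `k` factors. -/
def auxT (M : R → List R → R) (k : ℕ) (F : List R → V) (X Y : List R) : V :=
  ((splitsN k X).map fun Xs => ((splitsN k Y).map fun Ys =>
    F (List.zipWith (Mext M) Xs Ys)).sum).sum

theorem auxT_succ (M : R → List R → R) (k : ℕ) (F : List R → V) (X Y : List R) :
    auxT M (k + 1) F X Y = ((splits X).map fun p => ((splits Y).map fun q =>
      auxT M k (fun w => F (Mext M p.1 q.1 :: w)) p.2 q.2).sum).sum := by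
  simp only [auxT, splitsN, aux_sum_flatMap, List.map_map, Function.comp_def]
  congr 1
  apply List.map_congr_left
  intro p _
  rw [aux_sum_comm]
  rfl

/-- Words with a zero letter are killed. -/
def AuxZ (F : List R → V) : Prop := ∀ p s : List R, F (p ++ 0 :: s) = 0

theorem AuxZ.cons {F : List R → V} (h : AuxZ F) (a : R) : AuxZ fun w => F (a :: w) :=
  fun p s => h (a :: p) s

theorem auxT_zero_fun (M : R → List R → R) (k : ℕ) (F : List R → V) (hF : ∀ w, F w = 0)
    (X Y : List R) : auxT M k F X Y = 0 := by
  unfold auxT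
  apply aux_sum_zero
  intro a _
  apply aux_sum_zero
  intro b _
  exact hF _

theorem aux_left_nil (M : R → List R → R) (k : ℕ) {F : List R → V} (hF : AuxZ F) (X Y : List R) :
    ((splits Y).map fun q => auxT M k (fun w => F (Mext M [] q.1 :: w)) X q.2).sum
      = match Y with
        | [] => 0
        | y :: Y' => auxT M k (fun w => F (y :: w)) X Y' := by
  have h0 : ∀ w, F (0 :: w) = 0 := fun w => hF [] w
  rcases Y with _ | ⟨y, _ | ⟨y', Y⟩⟩
  · simp [aux_splits_nil, Mext, auxT_zero_fun, h0]
  · simp [aux_splits_cons, aux_splits_nil, Mext, auxT_zero_fun, h0]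
  · simp only [aux_splits_cons, List.map_cons, List.map_map, List.sum_cons, Function.comp_def,
      Mext]
    rw [auxT_zero_fun _ _ _ h0, aux_sum_zero]
    · simp
    · intro a _
      exact auxT_zero_fun _ _ _ h0 _ _

theorem auxT_nil (M : R → List R → R) (k : ℕ) {F : List R → V} (hF : AuxZ F) (Y : List R) :
    auxT M (k + 1) F [] Y = match Y with
        | [] => 0
        | y :: Y' => auxT M k (fun w => F (y :: w)) [] Y' := by
  rw [auxT_succ, aux_splits_nil]
  simp only [List.map_cons, List.map_nil, List.sum_cons, List.sum_nil, add_zero]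
  exact aux_left_nil M k hF [] Y

theorem auxT_cons (M : R → List R → R) (k : ℕ) {F : List R → V} (hF : AuxZ F) (x : R)
    (X Y : List R) :
    auxT M (k + 1) F (x :: X) Y = (match Y with
        | [] => 0
        | y :: Y' => auxT M k (fun w => F (y :: w)) (x :: X) Y')
      + ((splits Y).map fun q => auxT M k (fun w => F (M x q.1 :: w)) X q.2).sum := by
  have h0 : ∀ w, F (0 :: w) = 0 := fun w => hF [] w
  rw [auxT_succ, aux_splits_cons]
  simp only [List.map_cons, List.map_map, List.sum_cons]
  rw [aux_left_nil M k hF]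
  congr 1
  rcases X with _ | ⟨x', X⟩
  · simp [aux_splits_nil, Mext]
  · rw [aux_splits_cons]
    simp only [List.map_cons, List.map_map, List.sum_cons, Function.comp_def, Mext]
    rw [aux_sum_zero (splits X), add_zero]
    intro a _
    apply aux_sum_zero
    intro b _
    exact auxT_zero_fun _ _ _ h0 _ _

theorem auxT_sum (M : R → List R → R) (N : ℕ) (F : List R → V) (hF : AuxZ F)
    (X Y : List R) (hN : X.length + Y.length ≤ N) :
    ∑ k ∈ Finset.range (N + 1), auxT M k F X Y = auxG M F X Y := by
  induction N generalizing F X Y with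
  | zero =>
    have hX : X = [] := List.length_eq_zero_iff.1 (by omega)
    have hY : Y = [] := List.length_eq_zero_iff.1 (by omega)
    subst hX hY
    rw [auxG_nil]
    simp [auxT, splitsN]
  | succ N ih =>
    rw [Finset.sum_range_succ']
    rcases X with _ | ⟨x, X⟩
    · simp only [auxT_nil M _ hF]
      rcases Y with _ | ⟨y, Y⟩
      · rw [auxG_nil]; simp [auxT, splitsN]
      · simp only
        rw [ih _ (hF.cons y) _ _ (by simp at hN ⊢; omega), auxG_nil, auxG_nil]
        simp [auxT, splitsN]
    · simp only [auxT_cons M _ hF]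
      have h1 : auxT M 0 F (x :: X) Y = 0 := by simp [auxT, splitsN]
      rw [h1, Finset.sum_add_distrib, aux_finset_sum, add_zero]
      have h2 : ((splits Y).map fun q => ∑ k ∈ Finset.range (N + 1),
            auxT M k (fun w => F (M x q.1 :: w)) X q.2)
          = (splits Y).map fun q => auxG M (fun w => F (M x q.1 :: w)) X q.2 := by
        apply List.map_congr_left
        intro q hq
        have := aux_splits_length hq
        exact ih _ (hF.cons _) _ _ (by simp at hN ⊢; omega)
      rw [h2]
      rcases Y with _ | ⟨y, Y⟩
      · rw [auxG_cons_nil]; simp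
      · simp only
        rw [ih _ (hF.cons y) _ _ (by simp at hN ⊢; omega), auxG_cons_cons, add_comm]

theorem aux_starWords (M : R → List R → R) (F : List R → V) (hF : AuxZ F) (X Y : List R) :
    ((starWords M X Y).map F).sum = auxG M F X Y := by
  rw [← auxT_sum M _ F hF X Y le_rfl, Finset.sum_range_succ']
  by_cases hXY : X = [] ∧ Y = []
  · obtain ⟨rfl, rfl⟩ := hXY
    simp [starWords, auxT, splitsN]
  · have h0 : auxT M 0 F X Y = 0 := by
      rcases X with _ | ⟨x, X⟩ <;> rcases Y with _ | ⟨y, Y⟩ <;> simp [auxT, splitsN] at hXY ⊢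
    rw [h0, add_zero, starWords, aux_sum_flatMap, aux_sum_range]
    · apply Finset.sum_congr rfl
      intro k _
      rw [aux_sum_flatMap]
      simp only [List.map_map]
      rfl
    · rintro rfl rfl
      exact hXY ⟨rfl, rfl⟩

end

section

variable {K : Type*} [Field K] {R : Type*} [AddCommGroup R] [Module K R]
  {V : Type*} [AddCommGroup V] [Module K V]

/-- Multilinear functions of words. -/
def AuxML (K : Type*) [Field K] {R : Type*} [AddCommGroup R] [Module K R]
    {V : Type*} [AddCommGroup V] [Module K V] (F : List R → V) : Prop :=
  (∀ (p s : List R) (a b : R), F (p ++ (a + b) :: s) = F (p ++ a :: s) + F (p ++ b :: s)) ∧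
  (∀ (p s : List R) (c : K) (a : R), F (p ++ (c • a) :: s) = c • F (p ++ a :: s))

theorem AuxML.cons {F : List R → V} (h : AuxML K F) (a : R) : AuxML K fun w => F (a :: w) :=
  ⟨fun p s => h.1 (a :: p) s, fun p s => h.2 (a :: p) s⟩

theorem AuxML.z {F : List R → V} (h : AuxML K F) : AuxZ F := fun p s => by
  simpa using h.2 p s 0 0

/-- Linear extension of a function of `mu` of forests. -/
noncomputable def auxPhi (K : Type*) [Field K] {R : Type*} [AddCommGroup R] [Module K R]
    {V : Type*} [AddCommGroup V] [Module K V] (M : R → List R → R) (F : List R → V) :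
    ForestMod K R →ₗ[K] V :=
  Finsupp.linearCombination K fun g : Forest R => F (g.map (muT M))

/-- Linear extension of `mu` on trees. -/
noncomputable def auxMu (K : Type*) [Field K] {R : Type*} [AddCommGroup R] [Module K R]
    (M : R → List R → R) : TreeMod K R →ₗ[K] R :=
  Finsupp.linearCombination K (muT M)

theorem auxPhi_wordOf (M : R → List R → R) (l : List (TreeMod K R)) (F : List R → V)
    (hF : AuxML K F) : auxPhi K M F (wordOf l) = F (l.map (auxMu K M)) := by
  induction l generalizing F with
  | nil => simp [auxPhi, wordOf]
  | cons a l ih =>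
    let L : R →ₗ[K] V :=
      { toFun := fun b => F (b :: l.map (auxMu K M))
        map_add' := fun b c => hF.1 [] _ b c
        map_smul' := fun c b => hF.2 [] _ c b }
    have hL : F ((a :: l).map (auxMu K M)) = L (auxMu K M a) := rfl
    rw [hL, wordOf, auxMu, Finsupp.linearCombination_apply, map_finsuppSum, map_finsuppSum]
    apply Finsupp.sum_congr
    intro t _
    rw [map_smul, map_smul]
    congr 1
    have := ih (fun w => F (muT M t :: w)) (hF.cons _)
    change _ = F (muT M t :: l.map (auxMu K M))
    rw [← this]
    simp only [auxPhi]
    rw [Finsupp.linearCombination_mapDomain]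
    rfl

theorem auxMu_MextF (M : R → List R → R) (Mh : PTree R → Forest R → TreeMod K R)
    (X Y : Forest R)
    (hX : ∀ t ∈ X, ∀ f, auxMu K M (Mh t f) = M (muT M t) (f.map (muT M))) :
    auxMu K M (MextF Mh X Y) = Mext M (X.map (muT M)) (Y.map (muT M)) := by
  rcases X with _ | ⟨x, _ | ⟨x', X⟩⟩
  · rcases Y with _ | ⟨y, _ | ⟨y', Y⟩⟩ <;> simp [MextF, Mext, auxMu]
  · simp only [MextF, List.map_cons, List.map_nil, Mext]
    exact hX x (by simp) Y
  · simp [MextF, Mext]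

theorem aux_zip (M : R → List R → R) (Mh : PTree R → Forest R → TreeMod K R)
    (Xs Ys : List (Forest R))
    (hX : ∀ X ∈ Xs, ∀ t ∈ X, ∀ f, auxMu K M (Mh t f) = M (muT M t) (f.map (muT M))) :
    (List.zipWith (MextF Mh) Xs Ys).map (auxMu K M) =
      List.zipWith (Mext M) (Xs.map (List.map (muT M))) (Ys.map (List.map (muT M))) := by
  induction Xs generalizing Ys with
  | nil => simp
  | cons X Xs ih =>
    cases Ys with
    | nil => simp
    | cons Y Ys =>
      simp only [List.zipWith_cons_cons, List.map_cons]
      rw [auxMu_MextF M Mh X Y (hX X (by simp)), ih Ys fun X' h' => hX X' (by simp [h'])]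

theorem aux_star (M : R → List R → R) (Mh : PTree R → Forest R → TreeMod K R)
    (F : List R → V) (hF : AuxML K F) (X Y : Forest R)
    (hX : ∀ t ∈ X, ∀ f, auxMu K M (Mh t f) = M (muT M t) (f.map (muT M))) :
    auxPhi K M F (starRHS Mh X Y)
      = ((starWords M (X.map (muT M)) (Y.map (muT M))).map F).sum := by
  by_cases hXY : X = [] ∧ Y = []
  · obtain ⟨rfl, rfl⟩ := hXY
    simp [starWords, starRHS, auxPhi]
  · rw [starRHS, starWords, map_list_sum]
    · simp only [List.length_map, aux_sum_flatMap, List.map_map, aux_splitsN_map]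
      congr 1
      apply List.map_congr_left
      intro k _
      congr 1
      apply List.map_congr_left
      intro Xs hXs
      simp only [Function.comp_def, List.map_map]
      congr 1
      apply List.map_congr_left
      intro Ys _
      rw [auxPhi_wordOf M _ F hF, aux_zip M Mh Xs Ys]
      intro X' hX' t ht
      exact hX t (aux_splitsN_mem _ _ Xs hXs X' hX' t ht)
    · intro h1 h2
      exact hXY ⟨by simpa using h1, by simpa using h2⟩
    · rintro rfl rfl
      exact hXY ⟨rfl, rfl⟩

theorem aux_tree (M : R → List R → R)
    (hML : ∀ x, AuxML K (M x))
    (hbrace : BraceRel M)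
    (Mh : PTree R → Forest R → TreeMod K R)
    (starT : Forest R → Forest R → ForestMod K R)
    (h : IsTreeBrace Mh starT) :
    ∀ (t : PTree R) (f : Forest R), auxMu K M (Mh t f) = M (muT M t) (f.map (muT M))
  | PTree.node x ts, f => by
    have hX : ∀ t ∈ ts, ∀ f, auxMu K M (Mh t f) = M (muT M t) (f.map (muT M)) :=
      fun t ht f => aux_tree M hML hbrace Mh starT h t f
    have hnode : ∀ g : List (PTree R), muT M (PTree.node x g) = M x (g.map (muT M)) := by
      intro g
      rw [muT]
      congr 1
      simp
    have h1 := h.1 x ts f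
    rw [Bplus] at h1
    rw [h1, auxMu, Finsupp.linearCombination_mapDomain, h.2, hnode, hbrace]
    have h2 := aux_star M Mh (M x) (hML x) ts f hX
    rw [aux_starWords M (M x) (hML x).z] at h2
    rw [← auxG.eq_1 M (M x), ← h2, auxPhi]
    congr 2
    funext g
    exact hnode g
termination_by t => sizeOf t
decreasing_by
  have := List.sizeOf_lt_of_mem ht
  simp only [PTree.node.sizeOf_spec]
  omega

theorem aux_wd : AuxML K (wd K : List R → TensorAlgebra K R) := by
  constructor
  · intro p s a b
    simp [wd, mul_add, add_mul]
  · intro p s c a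
    simp [wd]

end

/-- Let `R` be a brace algebra and `μ : T(R^𝒯) → T(R)` the map
defined by `μ(1) = 1`, `μ(t₁⋯tₙ) = μ(t₁)⋯μ(tₙ)`, and
`μ(B₊ˣ(s₁⋯s_q)) = M_{1q}(x; μ(s₁)⋯μ(s_q))`.  Then `μ` intertwines the
Loday–Ronco products: `μ(f₁ ⋆ f₂) = μ(f₁) ⋆ μ(f₂)` for all decorated forests
`f₁, f₂ ∈ T(R^𝒯)`, where on the left `⋆` is the product of `T(R^𝒯)` induced by
the recursive brace operation on decorated trees and on the right `⋆` is the
product of `T(R)` induced by the brace structure of `R`. -/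
theorem mu_intertwines_star
    (K : Type*) [Field K] {R : Type*} [AddCommGroup R] [Module K R]
    (M : R → List R → R)
    (hM0 : ∀ x : R, M x [] = x)
    (hadd₁ : ∀ (a b : R) (ys : List R), M (a + b) ys = M a ys + M b ys)
    (hsmul₁ : ∀ (c : K) (a : R) (ys : List R), M (c • a) ys = c • M a ys)
    (hadd₂ : ∀ (x : R) (p s : List R) (a b : R),
      M x (p ++ (a + b) :: s) = M x (p ++ a :: s) + M x (p ++ b :: s))
    (hsmul₂ : ∀ (x : R) (p s : List R) (c : K) (a : R),
      M x (p ++ (c • a) :: s) = c • M x (p ++ a :: s))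
    (hbrace : BraceRel M)
    (Mh : PTree R → Forest R → TreeMod K R)
    (starT : Forest R → Forest R → ForestMod K R)
    (h : IsTreeBrace Mh starT) :
    ∀ f₁ f₂ : Forest R,
      ((starT f₁ f₂).sum fun g c => c • wd K (g.map (muT M))) =
        starW K M (f₁.map (muT M)) (f₂.map (muT M)) := by
  intro f₁ f₂
  have hML : ∀ x, AuxML K (M x) := fun x => ⟨hadd₂ x, hsmul₂ x⟩
  have := aux_star M Mh (wd K) aux_wd f₁ f₂
    fun t _ f => aux_tree M hML hbrace Mh starT h t f
  rw [h.2]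
  exact this
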